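/- Let λ be a Borel probability measure on [0,1] and let 𝒫¹ and 𝒫² be two sequences of partitions that are log-balanced a.e. with respect to λ, with weight functions f₁ and f₂ respectively. If f₂ is nondecreasing, then limsup_{n→∞} f₂(L_n(x,𝒫¹,𝒫²))/f₁(n) ≤ 1 for λ-almost every x. -/

import Mathlib

open MeasureTheory Filter Set Asymptotics

noncomputable section

/-- A topological partition of `[0,1]`: an (automatically at most countable) collection of
pairwise disjoint nonempty open subintervals of `[0,1]` whose closures cover `[0,1]`. -/
def IsTopPartition (P : Set (Set ℝ)) : Prop :=
  P.Countable ∧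
  (∀ I ∈ P, ∃ a b : ℝ, a < b ∧ 0 ≤ a ∧ b ≤ 1 ∧ I = Set.Ioo a b) ∧
  P.PairwiseDisjoint id ∧
  (⋃ I ∈ P, closure I) = Set.Icc (0 : ℝ) 1

/-- The set `E^Ps` of endpoints of the intervals of the partitions of the sequence `Ps`:
the points of `[0,1]` not covered by the open intervals of some partition. -/
def endpointSet (Ps : ℕ → Set (Set ℝ)) : Set ℝ :=
  ⋃ n, (Set.Icc (0 : ℝ) 1 \ ⋃₀ Ps n)

/-- `I_n^Ps(x)`: the unique interval of the partition `P` containing `x`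
(the empty set if there is none). -/
def cell (P : Set (Set ℝ)) (x : ℝ) : Set ℝ :=
  ⋃₀ {I | I ∈ P ∧ x ∈ I}

/-- A sequence of partitions is self-refining if every interval at depth `n+1` is contained
in an interval at depth `n`. -/
def SelfRefining (Ps : ℕ → Set (Set ℝ)) : Prop :=
  ∀ n, ∀ I ∈ Ps (n + 1), ∃ J ∈ Ps n, I ⊆ J

/-- Strictly self-refining: self-refining with `P_{n+1} ≠ P_n` for all `n`. -/
def StrictSelfRefining (Ps : ℕ → Set (Set ℝ)) : Prop :=
  SelfRefining Ps ∧ ∀ n, Ps (n + 1) ≠ Ps n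

/-- `Ps` is log-balanced a.e. with respect to `lam` with weight function `f`. -/
def LogBalancedAE (lam : Measure ℝ) (Ps : ℕ → Set (Set ℝ)) (f : ℕ → ℝ) : Prop :=
  lam (endpointSet Ps) = 0 ∧ Tendsto f atTop atTop ∧
    ∀ᵐ x ∂lam,
      Tendsto (fun n => -Real.log ((lam (cell (Ps n) x)).toReal) / f n) atTop (nhds 1)

/-- `Ps` is log-balanced in measure with respect to `lam` with weight function `f`. -/
def LogBalancedInMeasure (lam : Measure ℝ) (Ps : ℕ → Set (Set ℝ)) (f : ℕ → ℝ) : Prop :=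
  lam (endpointSet Ps) = 0 ∧ Tendsto f atTop atTop ∧
    TendstoInMeasure lam
      (fun n x => -Real.log ((lam (cell (Ps n) x)).toReal) / f n) atTop (fun _ => 1)

/-- The Lochs index `L_n(x, Ps¹, Ps²)`. -/
def lochsIndex (P1 P2 : ℕ → Set (Set ℝ)) (n : ℕ) (x : ℝ) : ℕ :=
  sSup {ℓ : ℕ | cell (P1 n) x ⊆ cell (P2 ℓ) x}

/-- The generalized inverse `f^{[-1]}(y) = min {n : f n ≥ y}` of a weight function. -/
def weightInv (f : ℕ → ℝ) (y : ℝ) : ℕ := sInf {n : ℕ | y ≤ f n}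

/-- Proposition: limsup of the normalized Lochs index is at most 1, a.e. -/
theorem lochs_limsup_ae (lam : Measure ℝ) [IsProbabilityMeasure lam]
    (hlam : lam (Set.Icc (0 : ℝ) 1)ᶜ = 0)
    (P1 P2 : ℕ → Set (Set ℝ))
    (hP1 : ∀ n, IsTopPartition (P1 n)) (hP2 : ∀ n, IsTopPartition (P2 n))
    (f₁ f₂ : ℕ → ℝ)
    (hb1 : LogBalancedAE lam P1 f₁) (hb2 : LogBalancedAE lam P2 f₂)
    (hmono : Monotone f₂) :
    ∀ᵐ x ∂lam,
      Filter.limsup (fun n => f₂ (lochsIndex P1 P2 n x) / f₁ n) atTop ≤ 1 := by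
  obtain ⟨-, hf1, h1⟩ := hb1
  obtain ⟨-, hf2, h2⟩ := hb2
  filter_upwards [h1, h2] with x hx1 hx2
  have hbdd : IsBoundedUnder (· ≥ ·) atTop
      (fun n => f₂ (lochsIndex P1 P2 n x) / f₁ n) := by
    refine ⟨-1, ?_⟩
    rw [eventually_map]
    filter_upwards [hf1.eventually_ge_atTop (-f₂ 0), hf1.eventually_gt_atTop 0] with n hn hpos
    have := hmono (Nat.zero_le (lochsIndex P1 P2 n x))
    change (-1 : ℝ) ≤ _
    rw [le_div_iff₀ hpos]
    linarith
  refine le_of_forall_gt_imp_ge_of_dense ?_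
  intro a ha
  refine limsup_le_of_le hbdd.isCoboundedUnder_le ?_
  have ha1 : 0 < a + 1 := by linarith
  have e1 : ∀ᶠ n in atTop, -Real.log ((lam (cell (P1 n) x)).toReal) / f₁ n < 2 * a / (a + 1) :=
    hx1.eventually_lt_const (by rw [lt_div_iff₀ ha1]; linarith)
  have e1' : ∀ᶠ n in atTop, 0 < -Real.log ((lam (cell (P1 n) x)).toReal) / f₁ n :=
    hx1.eventually_const_lt (by norm_num)
  have e2 : ∀ᶠ n in atTop, 2 / (a + 1) < -Real.log ((lam (cell (P2 n) x)).toReal) / f₂ n :=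
    hx2.eventually_const_lt (by rw [div_lt_iff₀ ha1]; linarith)
  obtain ⟨N, hN⟩ := eventually_atTop.1 (e2.and (hf2.eventually_gt_atTop 0))
  filter_upwards [e1, e1', hf1.eventually_gt_atTop 0, hf1.eventually_ge_atTop (f₂ (max N 1))]
    with n k1 k1' hpos hM
  rw [div_le_iff₀ hpos]
  by_cases hL : lochsIndex P1 P2 n x < max N 1
  · have := hmono hL.le
    nlinarith
  push Not at hL
  have hLN : N ≤ lochsIndex P1 P2 n x := le_trans (le_max_left _ _) hL
  have hL1 : 1 ≤ lochsIndex P1 P2 n x := le_trans (le_max_right _ _) hL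
  have hmem : cell (P1 n) x ⊆ cell (P2 (lochsIndex P1 P2 n x)) x := by
    have hb : BddAbove {ℓ : ℕ | cell (P1 n) x ⊆ cell (P2 ℓ) x} := by
      by_contra hb
      have : lochsIndex P1 P2 n x = 0 := by
        rw [lochsIndex, Nat.sSup_of_not_bddAbove hb]
      omega
    have hne : {ℓ : ℕ | cell (P1 n) x ⊆ cell (P2 ℓ) x}.Nonempty := by
      by_contra hne
      rw [Set.not_nonempty_iff_eq_empty] at hne
      have : lochsIndex P1 P2 n x = 0 := by
        rw [lochsIndex, hne]; simp
      omega
    exact Nat.sSup_mem hne hb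
  obtain ⟨q1, q2⟩ := hN _ hLN
  have hle : (lam (cell (P1 n) x)).toReal ≤
      (lam (cell (P2 (lochsIndex P1 P2 n x)) x)).toReal :=
    ENNReal.toReal_mono (measure_ne_top _ _) (measure_mono hmem)
  have hp : 0 < (lam (cell (P1 n) x)).toReal := by
    refine lt_of_le_of_ne ENNReal.toReal_nonneg ?_
    intro h0
    rw [← h0] at k1'
    simp at k1'
  have hlog := Real.log_le_log hp hle
  rw [lt_div_iff₀ q2] at q1
  rw [div_lt_iff₀ hpos] at k1
  have h3 : 2 / (a + 1) * f₂ (lochsIndex P1 P2 n x) < 2 / (a + 1) * (a * f₁ n) := by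
    have : 2 / (a + 1) * (a * f₁ n) = 2 * a / (a + 1) * f₁ n := by ring
    rw [this]; linarith
  exact (lt_of_mul_lt_mul_left h3 (by positivity)).le
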